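/- arXiv:2205.03155 — 5 statements merged into one kernel-verified Lean document; each statement's English description precedes it below -/
import Mathlib

section
/- Let F be a field of characteristic 2 and let L be a Lie algebra over F with a Z₂-grading L = L₀ ⊕ L₁. Let C denote the F-linear span in End(L) of {(ad x)² : x ∈ L₁}, and let S = ad(L) + C as a subspace of End(L). Then S is closed under the commutator bracket of End(L), i.e. S is a Lie subalgebra of the general linear Lie algebra gl(L). -/
theorem aux_two {F : Type*} [Field F] [CharP F 2] {M : Type*} [AddCommGroup M] [Module F M]
    (f : M) : f + f = 0 := by
  rw [← two_smul F f, CharTwo.two_eq_zero, zero_smul]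

theorem aux_sq {A : Type*} [Ring A] (h2 : ∀ a : A, a + a = 0) (X Y : A) :
    ⁅X ^ 2, Y⁆ = ⁅X, ⁅X, Y⁆⁆ := by
  have h : ⁅X ^ 2, Y⁆ - ⁅X, ⁅X, Y⁆⁆ = (X * Y * X - Y * X * X) + (X * Y * X - Y * X * X) := by
    simp only [Ring.lie_def]
    noncomm_ring
  rw [h2] at h
  exact sub_eq_zero.mp h

/-- Let `L` be a Lie algebra over a field `F` of characteristic `2` with a
`ℤ₂`-grading `L = L₀ ⊕ L₁`. With `C` the span of `{(ad x)² : x ∈ L₁}` in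
`End(L)` and `S = ad(L) + C`, the subspace `S` is closed under the commutator
bracket, i.e. it is a Lie subalgebra of `gl(L)`. -/
theorem adL_plus_squares_closed_under_bracket
    {F : Type*} [Field F] [CharP F 2] {L : Type*} [LieRing L] [LieAlgebra F L]
    (L₀ L₁ : Submodule F L)
    (h_inf : L₀ ⊓ L₁ = ⊥) (h_sup : L₀ ⊔ L₁ = ⊤)
    (h00 : ∀ x ∈ L₀, ∀ y ∈ L₀, ⁅x, y⁆ ∈ L₀)
    (h01 : ∀ x ∈ L₀, ∀ y ∈ L₁, ⁅x, y⁆ ∈ L₁)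
    (h11 : ∀ x ∈ L₁, ∀ y ∈ L₁, ⁅x, y⁆ ∈ L₀)
    (C : Submodule F (Module.End F L))
    (hC : C = Submodule.span F {f | ∃ x ∈ L₁, f = (LieAlgebra.ad F L x) ^ 2})
    (S : Submodule F (Module.End F L))
    (hS : S = LinearMap.range (LieAlgebra.ad F L : L →ₗ[F] Module.End F L) ⊔ C) :
    ∀ f ∈ S, ∀ g ∈ S, ⁅f, g⁆ ∈ S := by
  have h2 : ∀ a : Module.End F L, a + a = 0 := fun a => aux_two (F := F) a
  have map_lie' : ∀ x y : L, LieAlgebra.ad F L ⁅x, y⁆ = ⁅LieAlgebra.ad F L x, LieAlgebra.ad F L y⁆ := by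
    intro x y
    ext z
    simp [Ring.lie_def]
  have skew' : ∀ f g : Module.End F L, -⁅g, f⁆ = ⁅f, g⁆ := by
    intro f g
    simp [Ring.lie_def]
  have sq_ad : ∀ x y : L, ⁅(LieAlgebra.ad F L x) ^ 2, LieAlgebra.ad F L y⁆
      = LieAlgebra.ad F L ⁅x, ⁅x, y⁆⁆ := by
    intro x y
    rw [aux_sq h2, map_lie', map_lie']
  have ad_sq : ∀ x y : L, ⁅LieAlgebra.ad F L y, (LieAlgebra.ad F L x) ^ 2⁆
      = LieAlgebra.ad F L (-⁅x, ⁅x, y⁆⁆) := by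
    intro x y
    rw [← skew', sq_ad, map_neg]
  have sq_sq : ∀ x y : L, ⁅(LieAlgebra.ad F L x) ^ 2, (LieAlgebra.ad F L y) ^ 2⁆
      = LieAlgebra.ad F L ⁅⁅x, ⁅x, y⁆⁆, y⁆ := by
    intro x y
    rw [← skew', aux_sq h2, ad_sq, ← map_lie', ← map_neg, lie_neg, neg_neg, ← lie_skew, map_neg]
    exact (eq_neg_of_add_eq_zero_left (h2 _)).symm
  have hS' : S = Submodule.span F (Set.range (LieAlgebra.ad F L) ∪
      {f | ∃ x ∈ L₁, f = (LieAlgebra.ad F L x) ^ 2}) := by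
    rw [hS, hC, Submodule.span_union]
    congr 1
    exact (Submodule.span_eq (LinearMap.range (LieAlgebra.ad F L : L →ₗ[F] Module.End F L))).symm
  have had : ∀ x, LieAlgebra.ad F L x ∈ S := fun x => by
    rw [hS']; exact Submodule.subset_span (Or.inl ⟨x, rfl⟩)
  intro f hf g hg
  rw [hS'] at hf hg
  induction hf using Submodule.span_induction with
  | zero => rw [show ⁅(0 : Module.End F L), g⁆ = 0 from by (simp [Ring.lie_def])]; exact S.zero_mem
  | add a b _ _ ha hb => rw [show ⁅a + b, g⁆ = ⁅a, g⁆ + ⁅b, g⁆ from by (simp only [Ring.lie_def, add_mul, mul_add]; abel)]; exact S.add_mem ha hb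
  | smul c a _ ha => rw [show ⁅c • a, g⁆ = c • ⁅a, g⁆ from by (simp [Ring.lie_def, smul_sub])]; exact S.smul_mem c ha
  | mem f hf =>
    induction hg using Submodule.span_induction with
    | zero => rw [show ⁅f, (0 : Module.End F L)⁆ = 0 from by (simp [Ring.lie_def])]; exact S.zero_mem
    | add a b _ _ ha hb => rw [show ⁅f, a + b⁆ = ⁅f, a⁆ + ⁅f, b⁆ from by (simp only [Ring.lie_def, add_mul, mul_add]; abel)]; exact S.add_mem ha hb
    | smul c a _ ha => rw [show ⁅f, c • a⁆ = c • ⁅f, a⁆ from by (simp [Ring.lie_def, smul_sub])]; exact S.smul_mem c ha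
    | mem g hg =>
      rcases hf with ⟨x, rfl⟩ | ⟨x, _, rfl⟩ <;> rcases hg with ⟨y, rfl⟩ | ⟨y, _, rfl⟩
      · rw [← map_lie']; exact had _
      · rw [ad_sq]; exact had _
      · rw [sq_ad]; exact had _
      · rw [sq_sq]; exact had _
end

section
/- Let F be a field of characteristic 2 and let L be a Lie algebra over F with a Z₂-grading L = L₀ ⊕ L₁. Let C denote the F-linear span in End(L) of {(ad x)² : x ∈ L₁}, and let S = ad(L) + C. Then ⁅S, S⁆ ⊆ ad(L); in particular ad(L) is a Lie ideal of S and the quotient Lie algebra S / ad(L) is abelian. -/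
/-- Let `L` be a Lie algebra over a field `F` of characteristic `2` with a
`ℤ₂`-grading `L = L₀ ⊕ L₁`. With `C` the span of `{(ad x)² : x ∈ L₁}` in
`End(L)` and `S = ad(L) + C`, one has `⁅S, S⁆ ⊆ ad(L)`; in particular `ad(L)`
is a Lie ideal of `S` with abelian quotient. -/
theorem bracket_of_adL_plus_squares_mem_adL
    {F : Type*} [Field F] [CharP F 2] {L : Type*} [LieRing L] [LieAlgebra F L]
    (L₀ L₁ : Submodule F L)
    (h_inf : L₀ ⊓ L₁ = ⊥) (h_sup : L₀ ⊔ L₁ = ⊤)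
    (h00 : ∀ x ∈ L₀, ∀ y ∈ L₀, ⁅x, y⁆ ∈ L₀)
    (h01 : ∀ x ∈ L₀, ∀ y ∈ L₁, ⁅x, y⁆ ∈ L₁)
    (h11 : ∀ x ∈ L₁, ∀ y ∈ L₁, ⁅x, y⁆ ∈ L₀)
    (C : Submodule F (Module.End F L))
    (hC : C = Submodule.span F {f | ∃ x ∈ L₁, f = (LieAlgebra.ad F L x) ^ 2})
    (S : Submodule F (Module.End F L))
    (hS : S = LinearMap.range (LieAlgebra.ad F L : L →ₗ[F] Module.End F L) ⊔ C) :
    ∀ f ∈ S, ∀ g ∈ S,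
      ⁅f, g⁆ ∈ LinearMap.range (LieAlgebra.ad F L : L →ₗ[F] Module.End F L) := by
  let _ : LieRing (Module.End F L) := LieRing.ofAssociativeRing
  let _ : LieAlgebra F (Module.End F L) := LieAlgebra.ofAssociativeAlgebra
  have two : ∀ a : Module.End F L, a + a = 0 := by
    intro a
    have h : (2 : F) = 0 := CharP.cast_eq_zero F 2
    rw [← two_smul F a, h, zero_smul]
  have sq : ∀ f a : Module.End F L, ⁅f, a ^ 2⁆ = ⁅⁅f, a⁆, a⁆ := by
    intro f a
    have h := two (a * ⁅f, a⁆)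
    have e : ⁅f, a ^ 2⁆ = ⁅⁅f, a⁆, a⁆ + (a * ⁅f, a⁆ + a * ⁅f, a⁆) := by
      simp only [Ring.lie_def]
      noncomm_ring
    rw [e, h, add_zero]
  have key : ∀ f : Module.End F L,
      (∀ y : L, ∃ z : L, LieAlgebra.ad F L z = ⁅f, LieAlgebra.ad F L y⁆) →
      ∀ g ∈ S, ∃ z : L, LieAlgebra.ad F L z = ⁅f, g⁆ := by
    intro f hf g hg
    have hle : S ≤ (LinearMap.range (LieAlgebra.ad F L : L →ₗ[F] Module.End F L)).comap
        (LieAlgebra.ad F (Module.End F L) f) := by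
      rw [hS, hC]
      refine sup_le ?_ (Submodule.span_le.2 ?_)
      · rintro _ ⟨y, rfl⟩
        exact hf y
      · rintro _ ⟨y, _, rfl⟩
        obtain ⟨z, hz⟩ := hf y
        refine ⟨⁅z, y⁆, ?_⟩
        change LieAlgebra.ad F L ⁅z, y⁆ = ⁅f, (LieAlgebra.ad F L y) ^ 2⁆
        rw [sq, ← hz, LieHom.map_lie]
    exact hle hg
  intro f hf g hg
  refine key f (fun y => ?_) g hg
  obtain ⟨z, hz⟩ := key (LieAlgebra.ad F L y) (fun w => ⟨⁅y, w⁆, LieHom.map_lie _ _ _⟩) f hf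
  exact ⟨-z, by rw [map_neg, hz, Ring.lie_def, Ring.lie_def, neg_sub]⟩
end

section
/- Let F be a field of characteristic 2 and let L be a finite-dimensional Lie algebra over F with trivial center and with a Z₂-grading L = L₀ ⊕ L₁. Let C denote the F-linear span in End(L) of {(ad x)² : x ∈ L₁}, and let S = ad(L) + C. Then dim_F S ≤ dim_F L + dim_F L₁; equivalently, the quotient space S / ad(L) has dimension at most dim_F L₁. -/
/-- Let `L` be a finite-dimensional Lie algebra over a field `F` of
characteristic `2`, with trivial center and a `ℤ₂`-grading `L = L₀ ⊕ L₁`.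
With `C` the span of `{(ad x)² : x ∈ L₁}` in `End(L)` and `S = ad(L) + C`,
one has `dim S ≤ dim L + dim L₁`. -/
theorem finrank_adL_plus_squares_le
    {F : Type*} [Field F] [CharP F 2] {L : Type*} [LieRing L] [LieAlgebra F L]
    [FiniteDimensional F L]
    (h_center : LieAlgebra.center F L = ⊥)
    (L₀ L₁ : Submodule F L)
    (h_inf : L₀ ⊓ L₁ = ⊥) (h_sup : L₀ ⊔ L₁ = ⊤)
    (h00 : ∀ x ∈ L₀, ∀ y ∈ L₀, ⁅x, y⁆ ∈ L₀)
    (h01 : ∀ x ∈ L₀, ∀ y ∈ L₁, ⁅x, y⁆ ∈ L₁)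
    (h11 : ∀ x ∈ L₁, ∀ y ∈ L₁, ⁅x, y⁆ ∈ L₀)
    (C : Submodule F (Module.End F L))
    (hC : C = Submodule.span F {f | ∃ x ∈ L₁, f = (LieAlgebra.ad F L x) ^ 2})
    (S : Submodule F (Module.End F L))
    (hS : S = LinearMap.range (LieAlgebra.ad F L : L →ₗ[F] Module.End F L) ⊔ C) :
    Module.finrank F S ≤ Module.finrank F L + Module.finrank F L₁ := by
  classical
  let b := Module.finBasis F L₁
  let R := LinearMap.range (LieAlgebra.ad F L : L →ₗ[F] Module.End F L)
  let T : Submodule F (Module.End F L) :=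
    Submodule.span F (Set.range fun i => (LieAlgebra.ad F L (b i : L)) ^ 2)
  have h2 : ∀ f : Module.End F L, f + f = 0 := by
    intro f
    have h : (2 : F) = 0 := by exact_mod_cast CharP.cast_eq_zero F 2
    rw [← two_smul F f, h, zero_smul]
  have key : ∀ x : L₁, (LieAlgebra.ad F L (x : L)) ^ 2 ∈ R ⊔ T := by
    intro x
    have hx : x ∈ Submodule.span F (Set.range b) := by rw [b.span_eq]; trivial
    induction hx using Submodule.span_induction with
    | mem x h =>
      obtain ⟨i, rfl⟩ := h
      exact Submodule.mem_sup_right (Submodule.subset_span ⟨i, rfl⟩)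
    | zero => simp
    | add x y _ _ hx hy =>
      have e : (LieAlgebra.ad F L ((x + y : L₁) : L)) ^ 2
          = (LieAlgebra.ad F L (x : L)) ^ 2 + (LieAlgebra.ad F L (y : L)) ^ 2
            + LieAlgebra.ad F L ⁅(x : L), (y : L)⁆ := by
        have h := h2 (LieAlgebra.ad F L (y : L) * LieAlgebra.ad F L (x : L))
        have hl : LieAlgebra.ad F L ⁅(x : L), (y : L)⁆
            = LieAlgebra.ad F L (x : L) * LieAlgebra.ad F L (y : L)
              - LieAlgebra.ad F L (y : L) * LieAlgebra.ad F L (x : L) := by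
          ext z
          simp
        rw [hl, Submodule.coe_add, map_add, ← sub_eq_zero, ← h]
        noncomm_ring
      rw [e]
      exact add_mem (add_mem hx hy) (Submodule.mem_sup_left ⟨_, rfl⟩)
    | smul a x _ hx =>
      have e : (LieAlgebra.ad F L ((a • x : L₁) : L)) ^ 2
          = (a ^ 2) • (LieAlgebra.ad F L (x : L)) ^ 2 := by
        rw [Submodule.coe_smul, map_smul, smul_pow]
      rw [e]
      exact Submodule.smul_mem _ _ hx
  have hle : S ≤ R ⊔ T := by
    rw [hS, hC]
    refine sup_le le_sup_left (Submodule.span_le.2 ?_)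
    rintro f ⟨x, hx, rfl⟩
    exact key ⟨x, hx⟩
  have hR : Module.finrank F R ≤ Module.finrank F L := LinearMap.finrank_range_le _
  have hT : Module.finrank F T ≤ Module.finrank F L₁ := by
    have h := finrank_range_le_card (R := F)
      (fun i => (LieAlgebra.ad F L (b i : L)) ^ 2)
    rw [Fintype.card_fin] at h
    exact h
  calc Module.finrank F S ≤ Module.finrank F (R ⊔ T : Submodule F (Module.End F L)) :=
        Submodule.finrank_mono hle
    _ ≤ Module.finrank F R + Module.finrank F T := Submodule.finrank_add_le_finrank_add_finrank _ _
    _ ≤ _ := add_le_add hR hT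
end

section
/- Let F be a field of characteristic 2 and let L be a Lie algebra over F with trivial center and with a Z₂-grading L = L₀ ⊕ L₁. Let C denote the F-linear span in End(L) of {(ad x)² : x ∈ L₁}. If x ∈ L₁ and ad(x) ∈ ad(L₀) + C, then x = 0; equivalently, setting S₀ = ad(L₀) + C and S₁ = ad(L₁), one has S₀ ∩ S₁ = {0}. -/
/-- Let `L` be a Lie algebra over a field `F` of characteristic `2` with trivial
center and a `ℤ₂`-grading `L = L₀ ⊕ L₁`. With `C` the span of
`{(ad x)² : x ∈ L₁}` in `End(L)`, `S₀ = ad(L₀) + C` and `S₁ = ad(L₁)`, one has: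
if `x ∈ L₁` and `ad x ∈ S₀` then `x = 0`; equivalently `S₀ ∩ S₁ = {0}`. -/
theorem grading_S0_inf_S1_eq_bot
    {F : Type*} [Field F] [CharP F 2] {L : Type*} [LieRing L] [LieAlgebra F L]
    (h_center : LieAlgebra.center F L = ⊥)
    (L₀ L₁ : Submodule F L)
    (h_inf : L₀ ⊓ L₁ = ⊥) (h_sup : L₀ ⊔ L₁ = ⊤)
    (h00 : ∀ x ∈ L₀, ∀ y ∈ L₀, ⁅x, y⁆ ∈ L₀)
    (h01 : ∀ x ∈ L₀, ∀ y ∈ L₁, ⁅x, y⁆ ∈ L₁)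
    (h11 : ∀ x ∈ L₁, ∀ y ∈ L₁, ⁅x, y⁆ ∈ L₀)
    (C : Submodule F (Module.End F L))
    (hC : C = Submodule.span F {f | ∃ x ∈ L₁, f = (LieAlgebra.ad F L x) ^ 2})
    (S₀ S₁ : Submodule F (Module.End F L))
    (hS₀ : S₀ = Submodule.map (LieAlgebra.ad F L : L →ₗ[F] Module.End F L) L₀ ⊔ C)
    (hS₁ : S₁ = Submodule.map (LieAlgebra.ad F L : L →ₗ[F] Module.End F L) L₁) :
    (∀ x ∈ L₁, LieAlgebra.ad F L x ∈ S₀ → x = 0) ∧ S₀ ⊓ S₁ = ⊥ := by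
  have h10 : ∀ x ∈ L₁, ∀ y ∈ L₀, ⁅x, y⁆ ∈ L₁ := fun x hx y hy => by
    rw [← lie_skew]
    exact L₁.neg_mem (h01 y hy x hx)
  have hS : S₀ ≤ Submodule.compatibleMaps L₀ L₀ ⊓ Submodule.compatibleMaps L₁ L₁ := by
    rw [hS₀, hC, sup_le_iff, Submodule.map_le_iff_le_comap, Submodule.span_le]
    constructor
    · intro x hx
      exact ⟨fun y hy => h00 x hx y hy, fun y hy => h01 x hx y hy⟩
    · rintro f ⟨x, hx, rfl⟩
      rw [pow_two]
      exact ⟨fun y hy => h11 x hx _ (h10 x hx y hy), fun y hy => h10 x hx _ (h11 x hx y hy)⟩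
  have hz : ∀ y, y ∈ L₀ → y ∈ L₁ → y = 0 := fun y h0 h1 => by
    have : y ∈ L₀ ⊓ L₁ := ⟨h0, h1⟩
    rwa [h_inf, Submodule.mem_bot] at this
  have key : ∀ x ∈ L₁, LieAlgebra.ad F L x ∈ S₀ → x = 0 := by
    intro x hx hxS
    obtain ⟨ha, hb⟩ := hS hxS
    have hc : ∀ y : L, ⁅x, y⁆ = 0 := by
      intro y
      have hy : y ∈ L₀ ⊔ L₁ := h_sup ▸ Submodule.mem_top
      obtain ⟨a, h0, b, h1, rfl⟩ := Submodule.mem_sup.1 hy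
      rw [lie_add, hz ⁅x, a⁆ (ha h0) (h10 x hx a h0), hz ⁅x, b⁆ (h11 x hx b h1) (hb h1), add_zero]
    have hm : x ∈ LieAlgebra.center F L := by
      rw [LieModule.mem_maxTrivSubmodule]
      intro y
      rw [← lie_skew, hc, neg_zero]
    rwa [h_center, LieSubmodule.mem_bot] at hm
  refine ⟨key, ?_⟩
  rw [eq_bot_iff]
  rintro f ⟨hf0, hf1⟩
  rw [hS₁] at hf1
  obtain ⟨x, hx, rfl⟩ := hf1
  have := key x hx hf0
  subst this
  simp
end

section
/- Let F be a field of characteristic 2 and let L be a Lie algebra over F with a Z₂-grading L = L₀ ⊕ L₁. Let C denote the F-linear span in End(L) of {(ad x)² : x ∈ L₁}, and set S₀ = ad(L₀) + C and S₁ = ad(L₁) as subspaces of End(L). Then the commutator bracket of End(L) satisfies ⁅S₀, S₀⁆ ⊆ S₀, ⁅S₀, S₁⁆ ⊆ S₁, and ⁅S₁, S₁⁆ ⊆ S₀; in particular S₀ + S₁ = ad(L) + C is closed under the bracket. -/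
/-- Let `L` be a Lie algebra over a field `F` of characteristic `2` with a
`ℤ₂`-grading `L = L₀ ⊕ L₁`. With `C` the span of `{(ad x)² : x ∈ L₁}` in
`End(L)`, `S₀ = ad(L₀) + C` and `S₁ = ad(L₁)`, the commutator bracket of
`End(L)` satisfies `⁅S₀,S₀⁆ ⊆ S₀`, `⁅S₀,S₁⁆ ⊆ S₁` and `⁅S₁,S₁⁆ ⊆ S₀`. -/
theorem superization_grading_bracket_rules
    {F : Type*} [Field F] [CharP F 2] {L : Type*} [LieRing L] [LieAlgebra F L]
    (L₀ L₁ : Submodule F L)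
    (h_inf : L₀ ⊓ L₁ = ⊥) (h_sup : L₀ ⊔ L₁ = ⊤)
    (h00 : ∀ x ∈ L₀, ∀ y ∈ L₀, ⁅x, y⁆ ∈ L₀)
    (h01 : ∀ x ∈ L₀, ∀ y ∈ L₁, ⁅x, y⁆ ∈ L₁)
    (h11 : ∀ x ∈ L₁, ∀ y ∈ L₁, ⁅x, y⁆ ∈ L₀)
    (C : Submodule F (Module.End F L))
    (hC : C = Submodule.span F {f | ∃ x ∈ L₁, f = (LieAlgebra.ad F L x) ^ 2})
    (S₀ S₁ : Submodule F (Module.End F L))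
    (hS₀ : S₀ = Submodule.map (LieAlgebra.ad F L : L →ₗ[F] Module.End F L) L₀ ⊔ C)
    (hS₁ : S₁ = Submodule.map (LieAlgebra.ad F L : L →ₗ[F] Module.End F L) L₁) :
    (∀ f ∈ S₀, ∀ g ∈ S₀, ⁅f, g⁆ ∈ S₀) ∧
    (∀ f ∈ S₀, ∀ g ∈ S₁, ⁅f, g⁆ ∈ S₁) ∧
    (∀ f ∈ S₁, ∀ g ∈ S₁, ⁅f, g⁆ ∈ S₀) := by
  have two : ∀ a : Module.End F L, a + a = 0 := fun a => by
    have h : (2 : F) = 0 := by exact_mod_cast CharP.cast_eq_zero F 2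
    rw [← two_smul F a, h, zero_smul]
  have adl : ∀ x y : L, LieAlgebra.ad F L ⁅x, y⁆ =
      ⁅LieAlgebra.ad F L x, LieAlgebra.ad F L y⁆ := fun x y => by
    ext z
    simp [Ring.lie_def]
  have al : ∀ a b c : Module.End F L, ⁅a + b, c⁆ = ⁅a, c⁆ + ⁅b, c⁆ := fun a b c => by
    simp only [Ring.lie_def]; noncomm_ring
  have la : ∀ a b c : Module.End F L, ⁅a, b + c⁆ = ⁅a, b⁆ + ⁅a, c⁆ := fun a b c => by
    simp only [Ring.lie_def]; noncomm_ring
  have sl : ∀ (t : F) (a b : Module.End F L), ⁅t • a, b⁆ = t • ⁅a, b⁆ := fun t a b => by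
    simp only [Ring.lie_def, smul_mul_assoc, mul_smul_comm, smul_sub]
  have ls : ∀ (t : F) (a b : Module.End F L), ⁅a, t • b⁆ = t • ⁅a, b⁆ := fun t a b => by
    simp only [Ring.lie_def, smul_mul_assoc, mul_smul_comm, smul_sub]
  have key : ∀ f ∈ S₀, (∀ y, ⁅f, LieAlgebra.ad F L y⁆ = LieAlgebra.ad F L (f y)) ∧
      (∀ y ∈ L₀, f y ∈ L₀) ∧ (∀ y ∈ L₁, f y ∈ L₁) := by
    have h10 : ∀ x ∈ L₁, ∀ y ∈ L₀, ⁅x, y⁆ ∈ L₁ := fun x hx y hy => by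
      rw [← lie_skew]; exact L₁.neg_mem (h01 y hy x hx)
    intro f hf
    rw [hS₀] at hf
    obtain ⟨a, ha, c, hc, rfl⟩ := Submodule.mem_sup.1 hf
    obtain ⟨x, hx, rfl⟩ := Submodule.mem_map.1 ha
    clear hf
    have hc' : (∀ y, ⁅c, LieAlgebra.ad F L y⁆ = LieAlgebra.ad F L (c y)) ∧
        (∀ y ∈ L₀, c y ∈ L₀) ∧ (∀ y ∈ L₁, c y ∈ L₁) := by
      rw [hC] at hc
      induction hc using Submodule.span_induction with
      | mem c h =>
        obtain ⟨x, hx, rfl⟩ := h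
        refine ⟨fun y => ?_, fun y hy => ?_, fun y hy => ?_⟩
        · have e : ((LieAlgebra.ad F L x) ^ 2) y = ⁅x, ⁅x, y⁆⁆ := by simp [pow_two]
          rw [e, adl, adl]
          simp only [Ring.lie_def]
          generalize LieAlgebra.ad F L x = X
          generalize LieAlgebra.ad F L y = Y
          have h := two (X * Y * X - Y * X * X)
          rw [← sub_eq_zero, ← h]
          noncomm_ring
        · simpa [pow_two] using h11 x hx _ (h10 x hx y hy)
        · simpa [pow_two] using h10 x hx _ (h11 x hx y hy)
      | zero => simp [Ring.lie_def]
      | add a b _ _ ha hb =>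
        exact ⟨fun y => by rw [al, ha.1, hb.1, ← map_add]; rfl,
          fun y hy => L₀.add_mem (ha.2.1 y hy) (hb.2.1 y hy),
          fun y hy => L₁.add_mem (ha.2.2 y hy) (hb.2.2 y hy)⟩
      | smul t a _ ha =>
        exact ⟨fun y => by rw [sl, ha.1, ← map_smul]; rfl,
          fun y hy => L₀.smul_mem t (ha.2.1 y hy),
          fun y hy => L₁.smul_mem t (ha.2.2 y hy)⟩
    refine ⟨fun y => ?_, fun y hy => ?_, fun y hy => ?_⟩
    · rw [al, hc'.1, LinearMap.add_apply, map_add]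
      congr 1
      exact (adl _ _).symm
    · exact L₀.add_mem (h00 x hx y hy) (hc'.2.1 y hy)
    · exact L₁.add_mem (h01 x hx y hy) (hc'.2.2 y hy)
  refine ⟨fun f hf g hg => ?_, fun f hf g hg => ?_, fun f hf g hg => ?_⟩
  · obtain ⟨k, k0, k1⟩ := key f hf
    rw [hS₀] at hg ⊢
    obtain ⟨a, ha, c, hc, rfl⟩ := Submodule.mem_sup.1 hg
    obtain ⟨y, hy, rfl⟩ := Submodule.mem_map.1 ha
    rw [la]
    refine Submodule.add_mem_sup ⟨f y, k0 y hy, (k y).symm⟩ ?_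
    have sq : ∀ x ∈ L₁, (LieAlgebra.ad F L x) ^ 2 ∈ C := fun x hx => by
      rw [hC]; exact Submodule.subset_span ⟨x, hx, rfl⟩
    clear hg
    nth_rewrite 1 [hC] at hc
    induction hc using Submodule.span_induction with
    | mem c h =>
      obtain ⟨x, hx, rfl⟩ := h
      have e : ⁅f, (LieAlgebra.ad F L x) ^ 2⁆ = (LieAlgebra.ad F L (f x + x)) ^ 2
          - (LieAlgebra.ad F L (f x)) ^ 2 - (LieAlgebra.ad F L x) ^ 2 := by
        rw [map_add, ← k x]
        simp only [Ring.lie_def]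
        noncomm_ring
      rw [e]
      exact C.sub_mem (C.sub_mem (sq _ (L₁.add_mem (k1 x hx) hx)) (sq _ (k1 x hx))) (sq _ hx)
    | zero => simp [Ring.lie_def]
    | add a b _ _ ha hb => rw [la]; exact C.add_mem ha hb
    | smul t a _ ha => rw [ls]; exact C.smul_mem t ha
  · obtain ⟨k, k0, k1⟩ := key f hf
    rw [hS₁] at hg ⊢
    obtain ⟨y, hy, rfl⟩ := Submodule.mem_map.1 hg
    exact ⟨f y, k1 y hy, (k y).symm⟩
  · rw [hS₁] at hf hg
    obtain ⟨x, hx, rfl⟩ := Submodule.mem_map.1 hf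
    obtain ⟨y, hy, rfl⟩ := Submodule.mem_map.1 hg
    rw [hS₀]
    exact Submodule.mem_sup_left ⟨⁅x, y⁆, h11 x hx y hy, adl _ _⟩
end
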